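/- Fix an integer d ≥ 1, m > 0 and x ∈ ℝ^d. Then the probability measures V'_{x,a} on Ω(x) converge weakly, as a → 0⁺, to (m²/2)·V'_x. (This is the strong form of Theorem 3.2, proven on the space of parametrized paths.) -/

import Mathlib

open MeasureTheory Filter Topology Real Set
open scoped RealInnerProductSpace ENNReal unitInterval

noncomputable section

/-- `ℝ^d` as a Euclidean space. -/
abbrev Ed (d : ℕ) := EuclideanSpace ℝ (Fin d)

/-- The space of continuous paths `[0,1] → ℝ^d`, with the uniform metric. -/
abbrev PathSp (d : ℕ) := C(unitInterval, Ed d)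

instance (d : ℕ) : MeasurableSpace (PathSp d) := borel _
instance (d : ℕ) : BorelSpace (PathSp d) := ⟨rfl⟩

/-- Evaluation of a path at a real time, clamped to `[0,1]`. -/
def evalAt {d : ℕ} (ω : PathSp d) (t : ℝ) : Ed d := ω (Set.projIcc 0 1 zero_le_one t)

/-- `Ω(x)`: continuous paths starting at `x`. -/
abbrev Omega1 {d : ℕ} (x : Ed d) := {ω : PathSp d // ω 0 = x}

/-- `Ω(x,y)`: continuous paths from `x` to `y`. -/
abbrev Omega2 {d : ℕ} (x y : Ed d) := {ω : PathSp d // ω 0 = x ∧ ω 1 = y}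

/-- clamp a real number to `[0,1]`. -/
def clamp01 (r : ℝ) : ℝ := min 1 (max 0 r)

lemma clamp01_of_nonpos {r : ℝ} (h : r ≤ 0) : clamp01 r = 0 := by
  rw [clamp01, max_eq_left h, min_eq_right zero_le_one]

lemma clamp01_of_one_le {r : ℝ} (h : 1 ≤ r) : clamp01 r = 1 := by
  rw [clamp01, max_eq_right (zero_le_one.trans h), min_eq_left h]

lemma clamp01_continuous : Continuous clamp01 :=
  continuous_const.min (continuous_const.max continuous_id)

/-- The piecewise linear path starting at `x` with `N` steps given by the increments `v i`,
the `i`-th step being linearly parametrized by `[i/N, (i+1)/N]`. -/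
def pwLinE {d : ℕ} (x : Ed d) (N : ℕ) (v : Fin N → Ed d) : PathSp d :=
  ⟨fun t => x + ∑ i : Fin N, clamp01 ((N : ℝ) * (t : ℝ) - ((i : ℕ) : ℝ)) • v i, by
    refine continuous_const.add (continuous_finset_sum _ fun i _ => ?_)
    exact ((clamp01_continuous.comp
      ((continuous_const.mul continuous_subtype_val).sub continuous_const)).smul
      continuous_const)⟩

lemma pwLinE_zero {d : ℕ} (x : Ed d) (N : ℕ) (v : Fin N → Ed d) :
    pwLinE x N v 0 = x := by
  show x + ∑ i : Fin N, clamp01 ((N : ℝ) * ((0 : unitInterval) : ℝ) - ((i : ℕ) : ℝ)) • v i = x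
  have h : ∀ i : Fin N, clamp01 ((N : ℝ) * ((0 : unitInterval) : ℝ) - ((i : ℕ) : ℝ)) = 0 := by
    intro i
    apply clamp01_of_nonpos
    have h0 : ((0 : unitInterval) : ℝ) = 0 := rfl
    rw [h0, mul_zero, zero_sub]
    exact neg_nonpos.mpr (Nat.cast_nonneg (i : ℕ))
  simp only [h, zero_smul, Finset.sum_const_zero, add_zero]

lemma pwLinE_one {d : ℕ} (x : Ed d) (N : ℕ) (v : Fin N → Ed d) :
    pwLinE x N v 1 = x + ∑ i : Fin N, v i := by
  show x + ∑ i : Fin N, clamp01 ((N : ℝ) * ((1 : unitInterval) : ℝ) - ((i : ℕ) : ℝ)) • v i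
      = x + ∑ i : Fin N, v i
  have h : ∀ i : Fin N, clamp01 ((N : ℝ) * ((1 : unitInterval) : ℝ) - ((i : ℕ) : ℝ)) = 1 := by
    intro i
    apply clamp01_of_one_le
    have h1 : ((1 : unitInterval) : ℝ) = 1 := rfl
    have h2 : ((i : ℕ) : ℝ) + 1 ≤ (N : ℝ) := by
      exact_mod_cast Nat.succ_le_of_lt i.isLt
    rw [h1, mul_one]; linarith
  simp only [h, one_smul]

/-- Piecewise linear element of `Ω(x)` with increments `v`. -/
def pwLin1 {d : ℕ} (x : Ed d) (N : ℕ) (v : Fin N → Ed d) : Omega1 x :=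
  ⟨pwLinE x N v, pwLinE_zero x N v⟩

/-- Piecewise linear element of `Ω(x,y)` with increments `v` summing to `y - x`. -/
def pwLin2 {d : ℕ} (x y : Ed d) (N : ℕ) (v : Fin N → Ed d)
    (h : x + ∑ i : Fin N, v i = y) : Omega2 x y :=
  ⟨pwLinE x N v, pwLinE_zero x N v, by rw [pwLinE_one, h]⟩

/-- the point preceding `x_i` in the list `x, x_1, …, x_N`. -/
def prevPt {d : ℕ} (x : Ed d) {N : ℕ} (xs : Fin N → Ed d) (i : Fin N) : Ed d :=
  if (i : ℕ) = 0 then x else xs ⟨(i : ℕ) - 1, lt_of_le_of_lt (Nat.pred_le _) i.isLt⟩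

/-- The discrete measure `W_{x,a,N}`, i.e. the measure
`∏_{i=1}^N (2πa²)^{-d/2} exp(-|x_i - x_{i-1}|²/(2a²)) dx_1 … dx_N` (with `x_0 = x`)
on `N`-step piecewise linear paths, placed on `{a²N} × Ω(x) ⊆ ℝ × Ω(x)`.
For `N = 0` this is the Dirac measure at `(0, constant path at x)`. -/
def WxaN {d : ℕ} (x : Ed d) (a : ℝ) (N : ℕ) : Measure (ℝ × Omega1 x) :=
  Measure.map
    (fun xs : Fin N → Ed d =>
      ((a ^ 2 * N : ℝ), pwLin1 x N fun i => xs i - prevPt x xs i))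
    (volume.withDensity fun xs : Fin N → Ed d =>
      ENNReal.ofReal (∏ i : Fin N,
        (2 * π * a ^ 2) ^ (-(d : ℝ) / 2) *
          Real.exp (-‖xs i - prevPt x xs i‖ ^ 2 / (2 * a ^ 2))))

/-- The approximating probability measure
`W_{x,a} = (1 - e^{-m²a²/2}) Σ_{N=0}^∞ e^{-m²a²N/2} W_{x,a,N}`. -/
def Wxa {d : ℕ} (x : Ed d) (m a : ℝ) : Measure (ℝ × Omega1 x) :=
  ENNReal.ofReal (1 - Real.exp (-m ^ 2 * a ^ 2 / 2)) •
    Measure.sum fun N : ℕ =>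
      ENNReal.ofReal (Real.exp (-m ^ 2 * a ^ 2 * N / 2)) • WxaN x a N

/-- The lattice step of length `a` in direction `p.1`, forwards or backwards
according to `p.2`. -/
def stepVec {d : ℕ} (a : ℝ) (p : Fin d × Bool) : Ed d :=
  (if p.2 then a else -a) • EuclideanSpace.single p.1 (1 : ℝ)

/-- The normalized counting measure `V'_{x,a,N}` giving mass `(2d)^{-N}` to each
(piecewise linearly parametrized) `N`-step nearest-neighbour lattice path in `x + aℤ^d`
starting at `x`.  For `N = 0` it is the Dirac measure at the constant path. -/
def VxaN {d : ℕ} (x : Ed d) (a : ℝ) (N : ℕ) : Measure (Omega1 x) :=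
  Measure.sum fun s : Fin N → Fin d × Bool =>
    (((2 * d : ℕ) : ℝ≥0∞) ^ N)⁻¹ •
      Measure.dirac (pwLin1 x N fun i => stepVec a (s i))

/-- The approximating probability measure
`V'_{x,a} = (1 - e^{-m²a²/(2d)}) Σ_{N=0}^∞ e^{-m²a²N/(2d)} V'_{x,a,N}`. -/
def Vxa {d : ℕ} (x : Ed d) (m a : ℝ) : Measure (Omega1 x) :=
  ENNReal.ofReal (1 - Real.exp (-m ^ 2 * a ^ 2 / (2 * d))) •
    Measure.sum fun N : ℕ =>
      ENNReal.ofReal (Real.exp (-m ^ 2 * a ^ 2 * N / (2 * d))) • VxaN x a N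

/-- `Wt` is the family of Wiener measures `(W_x^t)_{t>0}` on `Ω(x)`:
each `W_x^t` is a Borel probability measure, characterized by the characteristic
functions of its finite dimensional distributions
`∫ exp(i Σ_j ξ_j·ω(t_j)) dW_x^t = exp(-(t/2) Σ_j (t_j - t_{j-1}) |ξ_j + ⋯ + ξ_n|²
+ i x·(ξ_1 + ⋯ + ξ_n))` for all `0 = t_0 < t_1 < ⋯ < t_n ≤ 1`. -/
def IsWienerFamily {d : ℕ} (x : Ed d) (Wt : ℝ → Measure (Omega1 x)) : Prop :=
  ∀ t : ℝ, 0 < t → (IsProbabilityMeasure (Wt t) ∧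
    ∀ (n : ℕ) (ts : ℕ → ℝ), ts 0 = 0 → (∀ i < n, ts i < ts (i + 1)) → ts n ≤ 1 →
      ∀ ξ : Fin n → Ed d,
        (∫ ω : Omega1 x, Complex.exp (Complex.I *
            ((∑ i : Fin n, ⟪ξ i, evalAt ω.1 (ts ((i : ℕ) + 1))⟫ : ℝ) : ℂ)) ∂(Wt t))
          = Complex.exp
              (((-(t / 2) * ∑ i : Fin n,
                  (ts ((i : ℕ) + 1) - ts (i : ℕ)) * ‖∑ j ∈ Finset.Ici i, ξ j‖ ^ 2 : ℝ) : ℂ)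
                + Complex.I * ((⟪∑ j, ξ j, x⟫ : ℝ) : ℂ)))

open ProbabilityTheory
open scoped BigOperators

/-!
The number of steps of a path of law `V'_{x,a}` is geometric, and a geometric variable is the
integer part of a rescaled exponential one: if `X` is exponential of rate `m² / 2`, then
`⌊d X / a²⌋₊` steps have the correct law for every `a`. Conditioning on `X`, dominated convergence
reduces the theorem to the convergence of the lattice walk with `⌊d t / a²⌋₊` steps to `W_x^t` for
fixed `t > 0`, which holds for walks with arbitrary isotropic bounded steps.

A path and its piecewise linear interpolation at the multiples of `2⁻ⁿ` are close, uniformly over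
the walks considered: passing from one dyadic level to the next moves a path by at most the largest
second difference on the finer grid, and fourth moments of the increments control the expected
maximum by a geometric sequence in `n`. The interpolated path is a continuous function of finitely
many increments, whose laws converge by Lévy's continuity theorem. Since the grid need not match the
steps of the walk, each increment is a sum of steps weighted by their overlaps with the grid cell;
only boundedly many steps meet two cells, so the covariances converge to those of Brownian motion.
-/

/-! ### The clamp function -/

lemma clamp01_nonneg (r : ℝ) : 0 ≤ clamp01 r := by simp [clamp01]

lemma clamp01_le_one (r : ℝ) : clamp01 r ≤ 1 := by simp [clamp01]

lemma clamp01_mono : Monotone clamp01 := fun r s h => by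
  unfold clamp01
  gcongr

lemma clamp01_of_mem {r : ℝ} (hr : r ∈ Icc (0 : ℝ) 1) : clamp01 r = r := by
  rw [clamp01, max_eq_right hr.1, min_eq_right hr.2]

lemma clamp01_sub_natCast (u : ℝ) (i : ℕ) :
    clamp01 (u - i) = min u ((i + 1 : ℕ) : ℝ) - min u (i : ℝ) := by
  push_cast
  unfold clamp01
  grind

lemma sum_clamp01_sub_natCast {N : ℕ} {u : ℝ} (hu : u ∈ Icc (0 : ℝ) N) :
    ∑ i : Fin N, clamp01 (u - (i : ℕ)) = u := by
  simp_rw [clamp01_sub_natCast u]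
  rw [Fin.sum_univ_eq_sum_range (fun i : ℕ => min u ((i + 1 : ℕ) : ℝ) - min u (i : ℝ)) N,
    Finset.sum_range_sub (fun i : ℕ => min u (i : ℝ))]
  simp [hu.1, hu.2]

lemma clamp01_mul_one_sub_le (r : ℝ) :
    clamp01 r * (1 - clamp01 r) ≤ clamp01 r - clamp01 (r - 1) := by
  rcases le_total r 1 with hr | hr
  · rw [clamp01_of_nonpos (sub_nonpos.2 hr)]
    nlinarith [clamp01_nonneg r]
  · rw [clamp01_of_one_le hr, sub_self, mul_zero]
    exact sub_nonneg.2 (clamp01_le_one _)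

/-- Only the step in progress at time `u` contributes to this sum. -/
lemma sum_clamp01_mul_one_sub_le (N : ℕ) (u : ℝ) :
    ∑ i : Fin N, clamp01 (u - (i : ℕ)) * (1 - clamp01 (u - (i : ℕ))) ≤ 1 := by
  calc ∑ i : Fin N, clamp01 (u - (i : ℕ)) * (1 - clamp01 (u - (i : ℕ)))
      ≤ ∑ i : Fin N, (clamp01 (u - (i : ℕ)) - clamp01 (u - ((i + 1 : ℕ) : ℝ))) := by
        refine Finset.sum_le_sum fun i _ => ?_
        rw [Nat.cast_succ, ← sub_sub]
        exact clamp01_mul_one_sub_le _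
    _ = clamp01 (u - (0 : ℕ)) - clamp01 (u - N) := by
        rw [Fin.sum_univ_eq_sum_range
          (fun i : ℕ => clamp01 (u - i) - clamp01 (u - ((i + 1 : ℕ) : ℝ))) N,
          Finset.sum_range_sub' (fun i : ℕ => clamp01 (u - i))]
    _ ≤ 1 := by linarith [clamp01_le_one (u - (0 : ℕ)), clamp01_nonneg (u - N)]

/-! ### Piecewise linear paths and grid interpolation -/

section Path

variable {d : ℕ} {x : Ed d}

lemma evalAt_of_mem (ω : PathSp d) {t : ℝ} (ht : t ∈ Icc (0 : ℝ) 1) : evalAt ω t = ω ⟨t, ht⟩ := by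
  rw [evalAt, projIcc_of_mem zero_le_one ht]

lemma evalAt_zero (ω : PathSp d) : evalAt ω 0 = ω 0 := by
  simp [evalAt]

lemma continuous_evalAt (t : ℝ) : Continuous fun ω : PathSp d => evalAt ω t :=
  continuous_eval_const _

lemma uniformContinuous_evalAt (ω : PathSp d) : UniformContinuous (evalAt ω) :=
  (CompactSpace.uniformContinuous_of_continuous ω.continuous).comp
    (LipschitzWith.projIcc zero_le_one).uniformContinuous

lemma pwLinE_apply (x : Ed d) (N : ℕ) (v : Fin N → Ed d) (t : I) :
    pwLinE x N v t = x + ∑ i : Fin N, clamp01 (N * t - (i : ℕ)) • v i :=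
  rfl

lemma pwLinE_apply_of_mul_eq {N k : ℕ} {θ : ℝ} {t : I} (v : ℕ → Ed d) (hk : k < N)
    (hθ : θ ∈ Icc (0 : ℝ) 1) (ht : N * (t : ℝ) = k + θ) :
    pwLinE x N (fun i => v i) t = x + ∑ i ∈ Finset.range k, v i + θ • v k := by
  have h_after : ∀ i ∈ Finset.range N, i ∉ Finset.range (k + 1) →
      clamp01 (N * (t : ℝ) - (i : ℕ)) • v i = 0 := fun i _ hi => by
    have : (k + 1 : ℝ) ≤ i := by exact_mod_cast not_lt.1 (Finset.mem_range.not.1 hi)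
    rw [clamp01_of_nonpos (by linarith [hθ.2]), zero_smul]
  have h_before : ∀ i ∈ Finset.range k, clamp01 (N * (t : ℝ) - (i : ℕ)) • v i = v i :=
    fun i hi => by
      have : (i + 1 : ℝ) ≤ k := by exact_mod_cast Finset.mem_range.1 hi
      rw [clamp01_of_one_le (by linarith [hθ.1]), one_smul]
  rw [pwLinE_apply, Fin.sum_univ_eq_sum_range (fun i : ℕ => clamp01 (N * (t : ℝ) - i) • v i) N,
    ← Finset.sum_subset (Finset.range_subset_range.2 hk) h_after, Finset.sum_range_succ,
    Finset.sum_congr rfl h_before, ht, add_sub_cancel_left, clamp01_of_mem hθ, add_assoc]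

lemma exists_nat_lt_mul_eq_add {N : ℕ} (hN : 0 < N) (t : I) :
    ∃ k < N, ∃ θ ∈ Icc (0 : ℝ) 1, N * (t : ℝ) = k + θ := by
  have hN' : (0 : ℝ) < N := Nat.cast_pos.2 hN
  rcases t.2.2.eq_or_lt with ht | ht
  · refine ⟨N - 1, Nat.sub_lt hN one_pos, 1, by simp, ?_⟩
    rw [ht, Nat.cast_pred hN]
    ring
  · have h0 : 0 ≤ N * (t : ℝ) := mul_nonneg hN'.le t.2.1
    refine ⟨⌊N * (t : ℝ)⌋₊, (Nat.floor_lt h0).2 (mul_lt_of_lt_one_right hN' ht),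
      N * (t : ℝ) - ⌊N * (t : ℝ)⌋₊, ⟨sub_nonneg.2 (Nat.floor_le h0), ?_⟩, (add_sub_cancel _ _).symm⟩
    linarith [Nat.lt_floor_add_one (N * (t : ℝ))]

/-- The increment of the path `ω` over the `j`-th of the `K` cells of the regular grid on
`[0,1]`. -/
def gridIncr (K : ℕ) (ω : PathSp d) (j : ℕ) : Ed d :=
  evalAt ω ((j + 1) / K) - evalAt ω (j / K)

/-- The piecewise linear interpolation of a path at the multiples of `1 / K`. -/
def gridPath (K : ℕ) (ω : Omega1 x) : Omega1 x :=
  pwLin1 x K fun j => gridIncr K ω.1 j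

lemma continuous_gridIncr (K j : ℕ) : Continuous fun ω : PathSp d => gridIncr K ω j :=
  (continuous_evalAt _).sub (continuous_evalAt _)

lemma continuous_pwLin1 (x : Ed d) (N : ℕ) : Continuous (pwLin1 x N) := by
  refine Continuous.subtype_mk (ContinuousMap.continuous_of_continuous_uncurry _ ?_) _
  simp only [Function.uncurry_def, pwLinE_apply]
  have := clamp01_continuous
  fun_prop

lemma continuous_gridPath (K : ℕ) : Continuous (gridPath K : Omega1 x → Omega1 x) :=
  (continuous_pwLin1 x K).comp
    (continuous_pi fun j => (continuous_gridIncr K j).comp continuous_subtype_val)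

lemma gridPath_apply_of_mul_eq (ω : Omega1 x) {K k : ℕ} {θ : ℝ} {t : I} (hk : k < K)
    (hθ : θ ∈ Icc (0 : ℝ) 1) (ht : K * (t : ℝ) = k + θ) :
    (gridPath K ω).1 t
      = AffineMap.lineMap (evalAt ω.1 (k / K)) (evalAt ω.1 ((k + 1) / K)) θ := by
  have h_sum : x + ∑ j ∈ Finset.range k, gridIncr K ω.1 j = evalAt ω.1 (k / K) := by
    have := Finset.sum_range_sub (fun j : ℕ => evalAt ω.1 (j / K)) k
    simp only [Nat.cast_succ, Nat.cast_zero, zero_div, evalAt_zero, ω.2] at this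
    simp only [gridIncr, this, add_sub_cancel]
  refine (pwLinE_apply_of_mul_eq (gridIncr K ω.1) hk hθ ht).trans ?_
  rw [h_sum, AffineMap.lineMap_apply_module', add_comm, gridIncr]

lemma tendsto_gridPath (ω : Omega1 x) : Tendsto (fun K => gridPath K ω) atTop (𝓝 ω) := by
  refine Metric.tendsto_nhds.2 fun ε hε => ?_
  obtain ⟨δ, hδ, hω⟩ := Metric.uniformContinuous_iff.1 (uniformContinuous_evalAt ω.1) ε hε
  filter_upwards [tendsto_one_div_atTop_nhds_zero_nat.eventually_lt_const hδ, eventually_gt_atTop 0]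
    with K hKδ hK
  refine (ContinuousMap.dist_lt_iff hε).2 fun t => ?_
  obtain ⟨k, hk, θ, hθ, ht⟩ := exists_nat_lt_mul_eq_add hK t
  have hK' : (0 : ℝ) < K := Nat.cast_pos.2 hK
  have ht' : (t : ℝ) = (k + θ) / K := by rw [← ht, mul_div_cancel_left₀ _ hK'.ne']
  have h_node : ∀ c ∈ Icc (0 : ℝ) 1, evalAt ω.1 ((k + c) / K) ∈ Metric.ball (ω.1 t) ε := by
    intro c hc
    rw [← evalAt_of_mem ω.1 t.2, Metric.mem_ball]
    refine hω (lt_of_le_of_lt ?_ hKδ)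
    rw [ht', Real.dist_eq, ← sub_div, add_sub_add_left_eq_sub, abs_div, abs_of_pos hK']
    gcongr
    exact abs_sub_le_iff.2 ⟨by linarith [hc.2, hθ.1], by linarith [hc.1, hθ.2]⟩
  rw [gridPath_apply_of_mul_eq ω hk hθ ht, ← Metric.mem_ball]
  refine (convex_ball _ _).lineMap_mem ?_ (h_node 1 (by simp)) hθ
  simpa using h_node 0 (by simp)

/-- Doubling the grid moves the interpolation on each cell by at most the second difference of the
path there. -/
lemma dist_gridPath_two_mul_le {K : ℕ} (hK : 0 < K) (ω : Omega1 x) {B : ℝ}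
    (hB : ∀ j < K, ‖gridIncr (2 * K) ω.1 (2 * j) - gridIncr (2 * K) ω.1 (2 * j + 1)‖ ≤ B) :
    dist (gridPath (2 * K) ω) (gridPath K ω) ≤ B := by
  refine (ContinuousMap.dist_le ((norm_nonneg _).trans (hB 0 hK))).2 fun t => ?_
  obtain ⟨k, hk, θ, hθ, ht⟩ := exists_nat_lt_mul_eq_add hK t
  have h_left : ((2 * k : ℕ) : ℝ) / (2 * K : ℕ) = k / K := by
    push_cast; exact mul_div_mul_left _ _ two_ne_zero
  have h_mid : ((2 * k + 1 : ℕ) : ℝ) / (2 * K : ℕ) = ((2 * k : ℕ) + 1) / (2 * K : ℕ) := by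
    rw [Nat.cast_succ]
  have h_right : ((2 * k + 1 : ℕ) + 1 : ℝ) / (2 * K : ℕ) = (k + 1) / K := by
    rw [← mul_div_mul_left ((k : ℝ) + 1) _ two_ne_zero]
    push_cast; ring
  have hB := hB k hk
  rw [gridIncr, gridIncr, h_mid, h_left, h_right] at hB
  have h_of_smul : ∀ c ∈ Icc (0 : ℝ) 1, (gridPath (2 * K) ω).1 t - (gridPath K ω).1 t
      = c • (evalAt ω.1 (((2 * k : ℕ) + 1) / (2 * K : ℕ)) - evalAt ω.1 (k / K) -
        (evalAt ω.1 ((k + 1) / K) - evalAt ω.1 (((2 * k : ℕ) + 1) / (2 * K : ℕ)))) →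
      dist ((gridPath (2 * K) ω).1 t) ((gridPath K ω).1 t) ≤ B := fun c hc h => by
    rw [dist_eq_norm, h, norm_smul, Real.norm_of_nonneg hc.1]
    exact (mul_le_of_le_one_left (norm_nonneg _) hc.2).trans hB
  rcases le_total θ (1 / 2) with hθ' | hθ'
  · refine h_of_smul θ hθ ?_
    rw [gridPath_apply_of_mul_eq ω hk hθ ht, gridPath_apply_of_mul_eq ω (k := 2 * k) (θ := 2 * θ)
      (by lia) ⟨by linarith [hθ.1], by linarith⟩ (by push_cast; linarith), h_left]
    simp only [AffineMap.lineMap_apply_module]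
    module
  · refine h_of_smul (1 - θ) ⟨by linarith [hθ.2], by linarith [hθ.1]⟩ ?_
    rw [gridPath_apply_of_mul_eq ω hk hθ ht, gridPath_apply_of_mul_eq ω (k := 2 * k + 1)
      (θ := 2 * θ - 1) (by lia) ⟨by linarith, by linarith [hθ.2]⟩ (by push_cast; linarith),
      h_mid, h_right]
    simp only [AffineMap.lineMap_apply_module]
    module

end Path

/-! ### Moments of random walks -/

section Expect

variable {P : Type*} [Fintype P]

lemma expect_fin_succ {M : Type*} [AddCommMonoid M] [Module ℚ≥0 M] {N : ℕ}
    (f : (Fin (N + 1) → P) → M) :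
    𝔼 s, f s = 𝔼 s : Fin N → P, 𝔼 p, f (Fin.cons p s) := by
  rw [Finset.expect_comm, ← Finset.expect_product', Finset.univ_product_univ]
  exact (Fintype.expect_equiv (Fin.consEquiv fun _ => P) _ _ fun _ => rfl).symm

lemma expect_prod_apply {K : Type*} [Semifield K] [CharZero K] {N : ℕ} (f : Fin N → P → K) :
    𝔼 s : Fin N → P, ∏ i, f i (s i) = ∏ i, 𝔼 p, f i p := by
  simp_rw [Fintype.expect_eq_sum_div_card, Finset.prod_div_distrib, Finset.prod_univ_sum,
    Fintype.piFinset_univ]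
  simp

end Expect

section Moments

variable {E P : Type*} [NormedAddCommGroup E] [InnerProductSpace ℝ E] {v : P → E}

lemma sum_smul_cons {N : ℕ} (c : Fin (N + 1) → ℝ) (p : P) (s : Fin N → P) :
    ∑ i, c i • v ((Fin.cons p s : Fin (N + 1) → P) i) = c 0 • v p + ∑ i, c i.succ • v (s i) := by
  rw [Fin.sum_univ_succ]
  simp only [Fin.cons_zero, Fin.cons_succ]

variable [Fintype P]

lemma expect_inner_eq_zero (hv : ∑ p, v p = 0) (w : E) : 𝔼 p, ⟪v p, w⟫ = 0 := by
  rw [Fintype.expect_eq_sum_div_card, ← sum_inner, hv, inner_zero_left, zero_div]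

variable [Nonempty P]

lemma expect_inner_sum_smul_eq_zero (hv : ∑ p, v p = 0) {N : ℕ} (c : Fin N → ℝ) (w : E) :
    𝔼 s : Fin N → P, ⟪w, ∑ i, c i • v (s i)⟫ = 0 := by
  simp_rw [real_inner_comm _ w]
  induction N with
  | zero => simp
  | succ N ih =>
    simp_rw [expect_fin_succ, sum_smul_cons, inner_add_left, inner_smul_left,
      Finset.expect_add_distrib, ← Finset.mul_expect, expect_inner_eq_zero hv,
      Fintype.expect_const, mul_zero, zero_add, ih]

variable {r : ℝ}

lemma expect_norm_sum_smul_sq_le (hv : ∑ p, v p = 0) (hr : ∀ p, ‖v p‖ ≤ r) {N : ℕ}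
    (c : Fin N → ℝ) : 𝔼 s : Fin N → P, ‖∑ i, c i • v (s i)‖ ^ 2 ≤ r ^ 2 * ∑ i, c i ^ 2 := by
  induction N with
  | zero => simp
  | succ N ih =>
    have h_step : ∀ s : Fin N → P, 𝔼 p, ‖c 0 • v p + ∑ i, c i.succ • v (s i)‖ ^ 2
        ≤ r ^ 2 * c 0 ^ 2 + ‖∑ i, c i.succ • v (s i)‖ ^ 2 := fun s => by
      simp_rw [norm_add_sq_real, inner_smul_left, Finset.expect_add_distrib, ← Finset.mul_expect,
        expect_inner_eq_zero hv, Fintype.expect_const, mul_zero, add_zero, norm_smul, mul_pow,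
        norm_eq_abs, sq_abs]
      gcongr
      refine Finset.expect_le Finset.univ_nonempty fun p _ => ?_
      rw [mul_comm]
      gcongr
      exact hr p
    simp_rw [expect_fin_succ, sum_smul_cons]
    refine (Finset.expect_le_expect fun s _ => h_step s).trans ?_
    rw [Finset.expect_add_distrib, Fintype.expect_const, Fin.sum_univ_succ, mul_add]
    gcongr
    exact ih _

lemma norm_add_pow_four_le (y z : E) :
    ‖y + z‖ ^ 4 ≤ ‖y‖ ^ 4 + 6 * ‖y‖ ^ 2 * ‖z‖ ^ 2 + ‖z‖ ^ 4
      + (4 * ‖y‖ ^ 2 * ⟪y, z⟫ + 4 * ‖z‖ ^ 2 * ⟪y, z⟫) := by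
  have h_cs : ⟪y, z⟫ ^ 2 ≤ (‖y‖ * ‖z‖) ^ 2 :=
    sq_le_sq' (neg_le_of_abs_le (abs_real_inner_le_norm y z)) (real_inner_le_norm y z)
  rw [show ‖y + z‖ ^ 4 = (‖y + z‖ ^ 2) ^ 2 by ring, norm_add_sq_real]
  linarith

/-- Expanding `‖y + S‖ ^ 4` for a step `y` and the remaining sum `S`, the terms of odd order in
`y` or in `S` average to zero. -/
lemma expect_norm_sum_smul_pow_four_le (hv : ∑ p, v p = 0) (hr : ∀ p, ‖v p‖ ≤ r) {N : ℕ}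
    (c : Fin N → ℝ) :
    𝔼 s : Fin N → P, ‖∑ i, c i • v (s i)‖ ^ 4 ≤ 3 * (r ^ 2 * ∑ i, c i ^ 2) ^ 2 := by
  induction N with
  | zero => simp
  | succ N ih =>
    set S : (Fin N → P) → E := fun s => ∑ i, c i.succ • v (s i)
    set q := ∑ i : Fin N, c i.succ ^ 2
    have h_norm : ∀ p, ‖c 0 • v p‖ ^ 2 ≤ r ^ 2 * c 0 ^ 2 := fun p => by
      rw [norm_smul, mul_pow, norm_eq_abs, sq_abs, mul_comm]
      gcongr
      exact hr p
    have h_odd_right : 𝔼 s, 𝔼 p, 4 * ‖c 0 • v p‖ ^ 2 * ⟪c 0 • v p, S s⟫ = 0 := by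
      rw [Finset.expect_comm]
      simp_rw [← Finset.mul_expect, S, expect_inner_sum_smul_eq_zero hv, mul_zero,
        Finset.expect_const_zero]
    have h_odd_left : 𝔼 s, 𝔼 p, 4 * ‖S s‖ ^ 2 * ⟪c 0 • v p, S s⟫ = 0 := by
      simp_rw [inner_smul_left, ← Finset.mul_expect, expect_inner_eq_zero hv, mul_zero,
        Finset.expect_const_zero]
    simp_rw [expect_fin_succ, sum_smul_cons]
    calc 𝔼 s, 𝔼 p, ‖c 0 • v p + S s‖ ^ 4
        ≤ 𝔼 s, 𝔼 p, ((r ^ 2 * c 0 ^ 2) ^ 2 + 6 * (r ^ 2 * c 0 ^ 2) * ‖S s‖ ^ 2 + ‖S s‖ ^ 4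
            + (4 * ‖c 0 • v p‖ ^ 2 * ⟪c 0 • v p, S s⟫
              + 4 * ‖S s‖ ^ 2 * ⟪c 0 • v p, S s⟫)) := by
          refine Finset.expect_le_expect fun s _ => Finset.expect_le_expect fun p _ =>
            (norm_add_pow_four_le _ _).trans ?_
          rw [show ‖c 0 • v p‖ ^ 4 = (‖c 0 • v p‖ ^ 2) ^ 2 by ring]
          gcongr <;> exact h_norm p
      _ = (r ^ 2 * c 0 ^ 2) ^ 2 + 6 * (r ^ 2 * c 0 ^ 2) * 𝔼 s, ‖S s‖ ^ 2 + 𝔼 s, ‖S s‖ ^ 4 := by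
          simp_rw [Finset.expect_add_distrib, h_odd_left, h_odd_right, Fintype.expect_const,
            ← Finset.mul_expect, add_zero]
      _ ≤ (r ^ 2 * c 0 ^ 2) ^ 2 + 6 * (r ^ 2 * c 0 ^ 2) * (r ^ 2 * q) + 3 * (r ^ 2 * q) ^ 2 := by
          gcongr
          · exact expect_norm_sum_smul_sq_le hv hr _
          · exact ih _
      _ ≤ 3 * (r ^ 2 * ∑ i, c i ^ 2) ^ 2 := by
          rw [Fin.sum_univ_succ]
          linarith [sq_nonneg (r ^ 2 * c 0 ^ 2)]

end Moments

/-! ### Increments of a piecewise linear path over the cells of a grid -/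

/-- The fraction of the `i`-th of `N` equal time steps of `[0,1]` that falls into the `j`-th of the
`K` cells of the regular grid. -/
def overlap (N K i j : ℕ) : ℝ :=
  clamp01 (N * ((j + 1) / K) - i) - clamp01 (N * (j / K) - i)

section Overlap

variable {N K : ℕ}

lemma clamp01_grid_mono (N K i : ℕ) : Monotone fun u : ℝ => clamp01 (N * (u / K) - i) :=
  fun _ _ _ => clamp01_mono (by gcongr)

lemma overlap_nonneg (N K i j : ℕ) : 0 ≤ overlap N K i j :=
  sub_nonneg.2 (clamp01_grid_mono N K i (le_add_of_nonneg_right zero_le_one))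

lemma overlap_add_overlap_le_one {j l : ℕ} (hjl : j ≠ l) (i : ℕ) :
    overlap N K i j + overlap N K i l ≤ 1 := by
  wlog h : j < l generalizing j l
  · rw [add_comm]
    exact this hjl.symm (hjl.symm.lt_of_le (not_lt.1 h))
  have h_mono := clamp01_grid_mono N K i (show (j : ℝ) + 1 ≤ l by exact_mod_cast h)
  simp only [overlap] at h_mono ⊢
  linarith [clamp01_nonneg (N * ((j : ℝ) / K) - i), clamp01_le_one (N * (((l : ℝ) + 1) / K) - i)]

lemma mul_div_mem_Icc {u : ℝ} (hu : u ∈ Icc (0 : ℝ) K) : N * (u / K) ∈ Icc (0 : ℝ) N :=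
  ⟨mul_nonneg N.cast_nonneg (div_nonneg hu.1 K.cast_nonneg),
    mul_le_of_le_one_right N.cast_nonneg (div_le_one_of_le₀ hu.2 K.cast_nonneg)⟩

lemma cast_mem_Icc_of_lt {j : ℕ} (hj : j < K) : (j : ℝ) ∈ Icc (0 : ℝ) K :=
  ⟨j.cast_nonneg, by exact_mod_cast hj.le⟩

lemma cast_add_one_mem_Icc_of_lt {j : ℕ} (hj : j < K) : (j + 1 : ℝ) ∈ Icc (0 : ℝ) K :=
  ⟨by positivity, by exact_mod_cast hj⟩

lemma sum_overlap {j : ℕ} (hj : j < K) : ∑ i : Fin N, overlap N K i j = N / K := by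
  simp_rw [overlap, Finset.sum_sub_distrib,
    sum_clamp01_sub_natCast (mul_div_mem_Icc (cast_mem_Icc_of_lt hj)),
    sum_clamp01_sub_natCast (mul_div_mem_Icc (cast_add_one_mem_Icc_of_lt hj))]
  ring

lemma overlap_mul_one_sub_le (N K i j : ℕ) :
    overlap N K i j * (1 - overlap N K i j)
      ≤ clamp01 (N * ((j + 1) / K) - i) * (1 - clamp01 (N * ((j + 1) / K) - i))
        + clamp01 (N * (j / K) - i) * (1 - clamp01 (N * (j / K) - i)) := by
  rw [overlap]
  nlinarith [mul_nonneg (clamp01_nonneg (N * (j / K) - i))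
    (sub_nonneg.2 (clamp01_le_one (N * ((j + 1) / K) - i)))]

/-- At most two steps lie partly inside and partly outside a given cell. -/
lemma sum_overlap_mul_one_sub_le (N K j : ℕ) :
    ∑ i : Fin N, overlap N K i j * (1 - overlap N K i j) ≤ 2 := by
  refine (Finset.sum_le_sum fun (i : Fin N) _ => overlap_mul_one_sub_le N K i j).trans ?_
  rw [Finset.sum_add_distrib]
  linarith [sum_clamp01_mul_one_sub_le N (N * ((j + 1) / K)),
    sum_clamp01_mul_one_sub_le N (N * (j / K))]

lemma gridIncr_pwLinE {d : ℕ} (x : Ed d) (v : Fin N → Ed d) {j : ℕ} (hj : j < K) :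
    gridIncr K (pwLinE x N v) j = ∑ i : Fin N, overlap N K i j • v i := by
  have h_mem : ∀ {u : ℝ}, u ∈ Icc (0 : ℝ) K → u / K ∈ Icc (0 : ℝ) 1 := fun hu =>
    ⟨div_nonneg hu.1 K.cast_nonneg, div_le_one_of_le₀ hu.2 K.cast_nonneg⟩
  rw [gridIncr, evalAt_of_mem _ (h_mem (cast_add_one_mem_Icc_of_lt hj)),
    evalAt_of_mem _ (h_mem (cast_mem_Icc_of_lt hj)), pwLinE_apply, pwLinE_apply,
    add_sub_add_left_eq_sub, ← Finset.sum_sub_distrib]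
  simp only [overlap, sub_smul]

end Overlap

/-! ### Approximation of random walks by their grid interpolations -/

/-- The piecewise linear path of the walk started at `x` whose `i`-th step is `v (s i)`. -/
def walkPath {d N : ℕ} {P : Type*} (x : Ed d) (v : P → Ed d) (s : Fin N → P) : Omega1 x :=
  pwLin1 x N fun i => v (s i)

section Chaining

variable {d N : ℕ} {P : Type*} {v : P → Ed d}

lemma gridIncr_walkPath (x : Ed d) (s : Fin N → P) {K j : ℕ} (hj : j < K) :
    gridIncr K (walkPath x v s).1 j = ∑ i : Fin N, overlap N K i j • v (s i) :=
  gridIncr_pwLinE x _ hj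

variable [Fintype P] [Nonempty P] {r : ℝ}

lemma expect_norm_gridIncr_sub_gridIncr_pow_four_le (hv : ∑ p, v p = 0) (hr : ∀ p, ‖v p‖ ≤ r)
    (x : Ed d) {K j : ℕ} (hj : j < K) :
    𝔼 s : Fin N → P, ‖gridIncr (2 * K) (walkPath x v s).1 (2 * j)
        - gridIncr (2 * K) (walkPath x v s).1 (2 * j + 1)‖ ^ 4 ≤ 3 * (r ^ 2 * (N / K)) ^ 2 := by
  have h_coeff : ∑ i : Fin N, (overlap N (2 * K) i (2 * j) - overlap N (2 * K) i (2 * j + 1)) ^ 2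
      ≤ N / K := by
    calc _ ≤ ∑ i : Fin N, (overlap N (2 * K) i (2 * j) + overlap N (2 * K) i (2 * j + 1)) := by
          refine Finset.sum_le_sum fun i _ => ?_
          nlinarith [overlap_nonneg N (2 * K) i (2 * j), overlap_nonneg N (2 * K) i (2 * j + 1),
            overlap_add_overlap_le_one (N := N) (K := 2 * K) (Nat.lt_succ_self (2 * j)).ne i]
      _ = N / K := by
          rw [Finset.sum_add_distrib, sum_overlap (by lia), sum_overlap (by lia), Nat.cast_mul,
            Nat.cast_ofNat, div_mul_eq_div_div_swap, add_halves]
  simp_rw [gridIncr_walkPath x _ (show 2 * j < 2 * K by lia),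
    gridIncr_walkPath x _ (show 2 * j + 1 < 2 * K by lia), ← Finset.sum_sub_distrib, ← sub_smul]
  refine (expect_norm_sum_smul_pow_four_le hv hr _).trans ?_
  gcongr

lemma le_add_pow_four_div {y c : ℝ} (hy : 0 ≤ y) (hc : 0 < c) : y ≤ c + y ^ 4 / c ^ 3 := by
  rcases le_total y c with h | h
  · exact h.trans (le_add_of_nonneg_right (by positivity))
  · refine le_add_of_nonneg_of_le hc.le ((le_div_iff₀ (by positivity)).2 ?_)
    calc y * c ^ 3 ≤ y * y ^ 3 := by gcongr
      _ = y ^ 4 := by ring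

lemma expect_dist_gridPath_two_mul_le (hv : ∑ p, v p = 0) (hr : ∀ p, ‖v p‖ ≤ r) (x : Ed d)
    {K : ℕ} (hK : 0 < K) {c : ℝ} (hc : 0 < c) :
    𝔼 s : Fin N → P, dist (gridPath (2 * K) (walkPath x v s)) (gridPath K (walkPath x v s))
      ≤ c + 3 * (r ^ 2 * N) ^ 2 / (K * c ^ 3) := by
  set δ : ℕ → (Fin N → P) → ℝ := fun j s => ‖gridIncr (2 * K) (walkPath x v s).1 (2 * j)
    - gridIncr (2 * K) (walkPath x v s).1 (2 * j + 1)‖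
  calc _ ≤ 𝔼 s, (c + ∑ j ∈ Finset.range K, δ j s ^ 4 / c ^ 3) := by
        refine Finset.expect_le_expect fun s _ => dist_gridPath_two_mul_le hK _ fun j hj =>
          (le_add_pow_four_div (norm_nonneg _) hc).trans ?_
        gcongr
        exact Finset.single_le_sum (f := fun j => δ j s ^ 4 / c ^ 3)
          (fun j _ => by positivity) (Finset.mem_range.2 hj)
    _ = c + ∑ j ∈ Finset.range K, (𝔼 s, δ j s ^ 4) / c ^ 3 := by
        simp_rw [Finset.expect_add_distrib, Fintype.expect_const, Finset.expect_sum_comm,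
          Finset.expect_div]
    _ ≤ c + ∑ j ∈ Finset.range K, 3 * (r ^ 2 * (N / K)) ^ 2 / c ^ 3 := by
        gcongr with j hj
        exact expect_norm_gridIncr_sub_gridIncr_pow_four_le hv hr x (Finset.mem_range.1 hj)
    _ = c + 3 * (r ^ 2 * N) ^ 2 / (K * c ^ 3) := by
        rw [Finset.sum_const, Finset.card_range, nsmul_eq_mul]
        have : (K : ℝ) ≠ 0 := Nat.cast_ne_zero.2 hK.ne'
        field_simp

/-- The scale `c = (9/10) ^ n` works because `1 < 2 * (9/10) ^ 4`. -/
lemma expect_dist_gridPath_two_pow_succ_le (hv : ∑ p, v p = 0) (hr : ∀ p, ‖v p‖ ≤ r) (x : Ed d)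
    (n : ℕ) :
    𝔼 s : Fin N → P,
        dist (gridPath (2 ^ n) (walkPath x v s)) (gridPath (2 ^ (n + 1)) (walkPath x v s))
      ≤ (1 + 3 * (r ^ 2 * N) ^ 2) * (9 / 10) ^ n := by
  have h := expect_dist_gridPath_two_mul_le (N := N) hv hr x (K := 2 ^ n) (by positivity)
    (c := (9 / 10 : ℝ) ^ n) (by positivity)
  simp_rw [dist_comm (gridPath (2 ^ n) _), pow_succ' 2 n]
  refine h.trans ?_
  have h_pow : (1 : ℝ) ≤ (9 / 10) ^ n * (((2 ^ n : ℕ) : ℝ) * ((9 / 10) ^ n) ^ 3) := by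
    calc (1 : ℝ) ≤ (2 * (9 / 10) ^ 4) ^ n := one_le_pow₀ (by norm_num)
      _ = _ := by rw [mul_pow, pow_right_comm]; push_cast; ring
  rw [one_add_mul]
  gcongr
  rw [div_le_iff₀ (by positivity), mul_assoc]
  exact le_mul_of_one_le_right (by positivity) h_pow

lemma expect_dist_gridPath_two_pow_le (hv : ∑ p, v p = 0) (hr : ∀ p, ‖v p‖ ≤ r) (x : Ed d)
    (n : ℕ) :
    𝔼 s : Fin N → P, dist (walkPath x v s) (gridPath (2 ^ n) (walkPath x v s))
      ≤ 10 * (1 + 3 * (r ^ 2 * N) ^ 2) * (9 / 10) ^ n := by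
  set C : ℝ := 1 + 3 * (r ^ 2 * N) ^ 2
  set γ : ℕ → (Fin N → P) → Omega1 x := fun k s => gridPath (2 ^ (n + k)) (walkPath x v s)
  have h_lim : Tendsto (fun k => 𝔼 s, dist (γ 0 s) (γ k s)) atTop
      (𝓝 (𝔼 s, dist (γ 0 s) (walkPath x v s))) := by
    simp_rw [Fintype.expect_eq_sum_div_card]
    refine (tendsto_finsetSum _ fun s _ => tendsto_const_nhds.dist ?_).div_const _
    exact (tendsto_gridPath _).comp ((tendsto_pow_atTop_atTop_of_one_lt one_lt_two).comp
      (tendsto_atTop_mono (fun k => Nat.le_add_left k n) tendsto_id))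
  simp_rw [dist_comm (walkPath x v _)]
  refine le_of_tendsto' h_lim fun k => ?_
  calc 𝔼 s, dist (γ 0 s) (γ k s)
      ≤ 𝔼 s, ∑ j ∈ Finset.range k, dist (γ j s) (γ (j + 1) s) :=
        Finset.expect_le_expect fun s _ => dist_le_range_sum_dist (fun j => γ j s) k
    _ = ∑ j ∈ Finset.range k, 𝔼 s, dist (γ j s) (γ (j + 1) s) := Finset.expect_sum_comm _ _ _
    _ ≤ ∑ j ∈ Finset.range k, C * (9 / 10) ^ (n + j) :=
        Finset.sum_le_sum fun j _ => expect_dist_gridPath_two_pow_succ_le hv hr x (n + j)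
    _ = C * (9 / 10) ^ n * ∑ j ∈ Finset.range k, (9 / 10 : ℝ) ^ j := by
        simp_rw [Finset.mul_sum, pow_add, mul_assoc]
    _ ≤ C * (9 / 10) ^ n * (1 - 9 / 10)⁻¹ := by
        gcongr
        rw [← tsum_geometric_of_lt_one (by norm_num) (by norm_num)]
        exact (summable_geometric_of_lt_one (by norm_num) (by norm_num)).sum_le_tsum _
          fun j _ => by positivity
    _ = 10 * C * (9 / 10) ^ n := by ring

end Chaining

/-! ### Characteristic functions of isotropic steps -/

/-- The step of a random walk, uniformly distributed on the finite family `v`, has mean zero and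
covariance `c` times the identity. -/
structure IsIsotropicStep {E P : Type*} [NormedAddCommGroup E] [InnerProductSpace ℝ E] [Fintype P]
    (v : P → E) (c : ℝ) : Prop where
  sum_eq_zero : ∑ p, v p = 0
  expect_inner_sq : ∀ θ : E, 𝔼 p, ⟪v p, θ⟫ ^ 2 = c * ‖θ‖ ^ 2

/-- The characteristic function of the uniform distribution on the finite family `v`. -/
def stepChar {E P : Type*} [NormedAddCommGroup E] [InnerProductSpace ℝ E] [Fintype P]
    (v : P → E) (θ : E) : ℂ :=
  𝔼 p, Complex.exp ((⟪v p, θ⟫ : ℝ) * Complex.I)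

lemma norm_prod_sub_prod_le {R ι : Type*} [NormedCommRing R] [NormOneClass R] (s : Finset ι)
    {z w : ι → R} (hz : ∀ i ∈ s, ‖z i‖ ≤ 1) (hw : ∀ i ∈ s, ‖w i‖ ≤ 1) :
    ‖∏ i ∈ s, z i - ∏ i ∈ s, w i‖ ≤ ∑ i ∈ s, ‖z i - w i‖ := by
  classical
  induction s using Finset.induction_on with
  | empty => simp
  | insert i s hi ih =>
    simp only [Finset.mem_insert, forall_eq_or_imp] at hz hw
    rw [Finset.prod_insert hi, Finset.prod_insert hi, Finset.sum_insert hi]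
    have h_prod : ‖∏ j ∈ s, w j‖ ≤ 1 := (Finset.norm_prod_le s w).trans
      (Finset.prod_le_one (fun _ _ => norm_nonneg _) hw.2)
    calc ‖z i * ∏ j ∈ s, z j - w i * ∏ j ∈ s, w j‖
        = ‖(z i - w i) * ∏ j ∈ s, w j + z i * (∏ j ∈ s, z j - ∏ j ∈ s, w j)‖ := by ring_nf
      _ ≤ ‖z i - w i‖ * ‖∏ j ∈ s, w j‖ + ‖z i‖ * ‖∏ j ∈ s, z j - ∏ j ∈ s, w j‖ :=
          (norm_add_le _ _).trans (add_le_add (norm_mul_le _ _) (norm_mul_le _ _))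
      _ ≤ ‖z i - w i‖ + ∑ j ∈ s, ‖z j - w j‖ :=
          add_le_add (mul_le_of_le_one_right (norm_nonneg _) h_prod)
            ((mul_le_of_le_one_left (norm_nonneg _) hz.1).trans (ih hz.2 hw.2))

lemma norm_exp_mul_I_sub_quadratic_le {u : ℝ} (hu : |u| ≤ 1) :
    ‖Complex.exp (u * Complex.I) - (1 + u * Complex.I - (u ^ 2 / 2 : ℝ))‖ ≤ |u| ^ 3 := by
  have h := Complex.exp_bound (x := u * Complex.I) (by simpa using hu) (n := 3) (by norm_num)
  norm_num [Finset.sum_range_succ, Nat.factorial, mul_pow] at h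
  calc _ = ‖Complex.exp (u * Complex.I) - (1 + u * Complex.I + -u ^ 2 / 2)‖ := by
        push_cast; ring_nf
    _ ≤ |u| ^ 3 * (2 / 9) := h
    _ ≤ |u| ^ 3 := mul_le_of_le_one_right (by positivity) (by norm_num)

lemma abs_real_inner_le_of_norm_le {E : Type*} [NormedAddCommGroup E] [InnerProductSpace ℝ E]
    {u : E} {r : ℝ} (hu : ‖u‖ ≤ r) (θ : E) : |⟪u, θ⟫| ≤ r * ‖θ‖ :=
  (abs_real_inner_le_norm _ _).trans (mul_le_mul_of_nonneg_right hu (norm_nonneg θ))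

section StepChar

variable {E P : Type*} [NormedAddCommGroup E] [InnerProductSpace ℝ E] [Fintype P] {v : P → E}

lemma stepChar_smul (a : ℝ) (v : P → E) (θ : E) :
    stepChar (fun p => a • v p) θ = stepChar v (a • θ) := by
  simp only [stepChar, inner_smul_left, inner_smul_right, conj_trivial]

namespace IsIsotropicStep

variable {c : ℝ}

lemma nonneg_mul_sq (hv : IsIsotropicStep v c) (θ : E) : 0 ≤ c * ‖θ‖ ^ 2 := by
  rw [← hv.expect_inner_sq]
  exact Finset.expect_nonneg fun _ _ => sq_nonneg _

end IsIsotropicStep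

variable [Nonempty P]

lemma norm_stepChar_le_one (v : P → E) (θ : E) : ‖stepChar v θ‖ ≤ 1 :=
  (RCLike.norm_expect_le (K := ℂ)).trans
    (Finset.expect_le Finset.univ_nonempty fun _ _ => (Complex.norm_exp_ofReal_mul_I _).le)

namespace IsIsotropicStep

variable {c r : ℝ}

lemma mul_sq_le (hv : IsIsotropicStep v c) (hr : ∀ p, ‖v p‖ ≤ r) (θ : E) :
    c * ‖θ‖ ^ 2 ≤ (r * ‖θ‖) ^ 2 := by
  rw [← hv.expect_inner_sq]
  exact Finset.expect_le Finset.univ_nonempty fun p _ =>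
    sq_le_sq.2 ((abs_real_inner_le_of_norm_le (hr p) θ).trans (le_abs_self _))

lemma norm_stepChar_sub_quadratic_le (hv : IsIsotropicStep v c) (hr : ∀ p, ‖v p‖ ≤ r) {θ : E}
    (hθ : r * ‖θ‖ ≤ 1) : ‖stepChar v θ - (1 - c * ‖θ‖ ^ 2 / 2 : ℝ)‖ ≤ (r * ‖θ‖) ^ 3 := by
  have h_expect : 𝔼 p, (1 + (⟪v p, θ⟫ : ℝ) * Complex.I - ((⟪v p, θ⟫ ^ 2 / 2 : ℝ) : ℂ))
      = (1 - c * ‖θ‖ ^ 2 / 2 : ℝ) := by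
    rw [Finset.expect_sub_distrib, Finset.expect_add_distrib, Fintype.expect_const,
      ← Finset.expect_mul, ← Complex.ofReal_expect, ← Complex.ofReal_expect,
      expect_inner_eq_zero hv.sum_eq_zero, ← Finset.expect_div, hv.expect_inner_sq]
    push_cast
    ring
  rw [← h_expect, stepChar, ← Finset.expect_sub_distrib]
  refine (RCLike.norm_expect_le (K := ℂ)).trans
    (Finset.expect_le Finset.univ_nonempty fun p _ => ?_)
  have h_inner := abs_real_inner_le_of_norm_le (hr p) θ
  exact (norm_exp_mul_I_sub_quadratic_le (h_inner.trans hθ)).trans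
    (pow_le_pow_left₀ (abs_nonneg _) h_inner 3)

lemma norm_stepChar_sub_exp_le (hv : IsIsotropicStep v c) (hr : ∀ p, ‖v p‖ ≤ r) {θ : E}
    (hθ : r * ‖θ‖ ≤ 1) :
    ‖stepChar v θ - Real.exp (-(c / 2 * ‖θ‖ ^ 2))‖ ≤ 2 * (r * ‖θ‖) ^ 3 := by
  have hr0 : 0 ≤ r * ‖θ‖ := mul_nonneg ((norm_nonneg _).trans (hr (Classical.arbitrary P)))
    (norm_nonneg θ)
  set y : ℝ := c / 2 * ‖θ‖ ^ 2 with hy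
  have hy0 : 0 ≤ y := by linarith [hv.nonneg_mul_sq θ]
  have hy1 : y ≤ (r * ‖θ‖) ^ 2 := by linarith [hv.mul_sq_le hr θ]
  have h_exp : |Real.exp (-y) - (1 - y)| ≤ (r * ‖θ‖) ^ 3 := by
    calc |Real.exp (-y) - (1 - y)| = |Real.exp (-y) - 1 - -y| := by ring_nf
      _ ≤ (-y) ^ 2 := Real.abs_exp_sub_one_sub_id_le (by
          rw [abs_neg, abs_of_nonneg hy0]
          exact hy1.trans (pow_le_one₀ hr0 hθ))
      _ ≤ ((r * ‖θ‖) ^ 2) ^ 2 := by rw [neg_sq]; gcongr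
      _ = (r * ‖θ‖) ^ 4 := by ring
      _ ≤ (r * ‖θ‖) ^ 3 := pow_le_pow_of_le_one hr0 hθ (by norm_num)
  have h_quad := hv.norm_stepChar_sub_quadratic_le hr hθ
  rw [mul_div_right_comm, ← hy] at h_quad
  calc ‖stepChar v θ - Real.exp (-y)‖
      ≤ ‖stepChar v θ - (1 - y : ℝ)‖ + ‖((1 - y : ℝ) : ℂ) - Real.exp (-y)‖ :=
        norm_sub_le_norm_sub_add_norm_sub _ _ _
    _ ≤ (r * ‖θ‖) ^ 3 + (r * ‖θ‖) ^ 3 := by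
        gcongr
        rwa [← Complex.ofReal_sub, Complex.norm_real, Real.norm_eq_abs, abs_sub_comm]
    _ = 2 * (r * ‖θ‖) ^ 3 := by ring

lemma norm_prod_stepChar_sub_exp_le (hv : IsIsotropicStep v c) (hr : ∀ p, ‖v p‖ ≤ r) {ι : Type*}
    [Fintype ι] {θ : ι → E} {b : ℝ} (hb : ∀ i, ‖θ i‖ ≤ b) (hrb : r * b ≤ 1) :
    ‖∏ i, stepChar v (θ i) - Real.exp (-(c / 2 * ∑ i, ‖θ i‖ ^ 2))‖
      ≤ Fintype.card ι * (2 * (r * b) ^ 3) := by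
  have hr0 : 0 ≤ r := (norm_nonneg _).trans (hr (Classical.arbitrary P))
  have h_mul : ∀ i, r * ‖θ i‖ ≤ r * b := fun i => mul_le_mul_of_nonneg_left (hb i) hr0
  rw [Finset.mul_sum, ← Finset.sum_neg_distrib, Real.exp_sum, Complex.ofReal_prod]
  calc _ ≤ ∑ i, ‖stepChar v (θ i) - Real.exp (-(c / 2 * ‖θ i‖ ^ 2))‖ := by
        refine norm_prod_sub_prod_le _ (fun i _ => norm_stepChar_le_one _ _) fun i _ => ?_
        rw [Complex.norm_real, Real.norm_of_nonneg (Real.exp_pos _).le, Real.exp_le_one_iff]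
        linarith [hv.nonneg_mul_sq (θ i)]
    _ ≤ ∑ _i : ι, 2 * (r * b) ^ 3 := by
        refine Finset.sum_le_sum fun i _ =>
          (hv.norm_stepChar_sub_exp_le hr ((h_mul i).trans hrb)).trans ?_
        gcongr 2 * ?_ ^ 3
        exact h_mul i
    _ = Fintype.card ι * (2 * (r * b) ^ 3) := by
        rw [Finset.sum_const, Finset.card_univ, nsmul_eq_mul]

lemma tendsto_prod_stepChar (hv : IsIsotropicStep v c) {κ : Type*} {l : Filter κ} {a : κ → ℝ}
    (ha : Tendsto a l (𝓝 0)) {N : κ → ℕ} {T : ℝ} (hN : Tendsto (fun k => a k ^ 2 * N k) l (𝓝 T))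
    {θ : ∀ k, Fin (N k) → E} {B : ℝ} (hB : ∀ k i, ‖θ k i‖ ≤ B) {Q : ℝ}
    (hQ : Tendsto (fun k => a k ^ 2 * ∑ i, ‖θ k i‖ ^ 2) l (𝓝 Q)) :
    Tendsto (fun k => ∏ i, stepChar v (a k • θ k i)) l (𝓝 (Real.exp (-(c / 2 * Q)) : ℂ)) := by
  obtain ⟨r, hr⟩ : ∃ r, ∀ p, ‖v p‖ ≤ r :=
    (Set.finite_range fun p => ‖v p‖).bddAbove.imp fun r h p => h ⟨p, rfl⟩
  have h_small : ∀ᶠ k in l, r * (|a k| * B) ≤ 1 := by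
    have : Tendsto (fun k => r * (|a k| * B)) l (𝓝 0) := by
      simpa using (ha.abs.mul_const B).const_mul r
    exact (this.eventually_lt_const one_pos).mono fun _ h => h.le
  have h_norm : ∀ k i, ‖a k • θ k i‖ ≤ |a k| * B := fun k i => by
    rw [norm_smul, Real.norm_eq_abs]
    exact mul_le_mul_of_nonneg_left (hB k i) (abs_nonneg _)
  have h_gauss : Tendsto (fun k => (Real.exp (-(c / 2 * ∑ i, ‖a k • θ k i‖ ^ 2)) : ℂ)) l
      (𝓝 (Real.exp (-(c / 2 * Q)) : ℂ)) := by
    have h_cont : Continuous fun q : ℝ => (Real.exp (-(c / 2 * q)) : ℂ) := by fun_prop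
    refine ((h_cont.tendsto Q).comp hQ).congr fun k => ?_
    simp only [Function.comp_apply, norm_smul, Real.norm_eq_abs, mul_pow, sq_abs, Finset.mul_sum]
  refine h_gauss.congr_dist (squeeze_zero' (Eventually.of_forall fun _ => dist_nonneg)
    (g := fun k => 2 * (r * B) ^ 3 * (|a k| * (a k ^ 2 * N k))) ?_ ?_)
  · filter_upwards [h_small] with k hk
    rw [dist_comm, dist_eq_norm]
    refine (hv.norm_prod_stepChar_sub_exp_le hr (h_norm k) hk).trans_eq ?_
    rw [Fintype.card_fin, ← sq_abs (a k)]
    ring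
  · simpa using (ha.abs.mul hN).const_mul (2 * (r * B) ^ 3)

end IsIsotropicStep

end StepChar

/-! ### Increments of a random walk over the cells of a grid -/

section OverlapGram

variable {N K : ℕ}

lemma overlap_le_one (N K i j : ℕ) : overlap N K i j ≤ 1 := by
  rw [overlap]
  linarith [clamp01_nonneg (N * ((j : ℝ) / K) - i), clamp01_le_one (N * (((j : ℝ) + 1) / K) - i)]

lemma abs_sum_overlap_mul_overlap_sub_le {j l : ℕ} (hj : j < K) :
    |∑ i : Fin N, overlap N K i j * overlap N K i l - if j = l then (N / K : ℝ) else 0| ≤ 2 := by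
  have h_nonneg : 0 ≤ ∑ i : Fin N, overlap N K i j * (1 - overlap N K i j) :=
    Finset.sum_nonneg fun i _ =>
      mul_nonneg (overlap_nonneg N K i j) (sub_nonneg.2 (overlap_le_one N K i j))
  have h_le := sum_overlap_mul_one_sub_le N K j
  split_ifs with hjl
  · subst hjl
    rw [← sum_overlap hj, abs_sub_comm, ← Finset.sum_sub_distrib]
    simp_rw [← mul_one_sub]
    rwa [abs_of_nonneg h_nonneg]
  · rw [sub_zero, abs_of_nonneg (Finset.sum_nonneg fun (i : Fin N) _ =>
      mul_nonneg (overlap_nonneg N K i j) (overlap_nonneg N K i l))]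
    refine (Finset.sum_le_sum fun (i : Fin N) _ => ?_).trans h_le
    exact mul_le_mul_of_nonneg_left
      (le_sub_iff_add_le'.2 (overlap_add_overlap_le_one hjl i)) (overlap_nonneg N K i j)

variable {E : Type*} [NormedAddCommGroup E] [InnerProductSpace ℝ E]

lemma norm_sum_overlap_smul_le (N K i : ℕ) (ξ : Fin K → E) :
    ‖∑ j : Fin K, overlap N K i j • ξ j‖ ≤ ∑ j, ‖ξ j‖ := by
  refine norm_sum_le_of_le _ fun j _ => ?_
  rw [norm_smul, Real.norm_of_nonneg (overlap_nonneg N K i j)]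
  exact mul_le_of_le_one_left (norm_nonneg _) (overlap_le_one N K i j)

lemma sum_norm_sum_smul_sq {ι κ : Type*} [Fintype ι] [Fintype κ] (c : ι → κ → ℝ) (ξ : κ → E) :
    ∑ i, ‖∑ j, c i j • ξ j‖ ^ 2 = ∑ j, ∑ l, (∑ i, c i j * c i l) * ⟪ξ j, ξ l⟫ := by
  simp_rw [← real_inner_self_eq_norm_sq, sum_inner, inner_sum, real_inner_smul_left,
    real_inner_smul_right, Finset.sum_mul, mul_assoc]
  rw [Finset.sum_comm]
  exact Finset.sum_congr rfl fun j _ => Finset.sum_comm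

lemma abs_sum_norm_sum_overlap_smul_sq_sub_le (N : ℕ) (ξ : Fin K → E) :
    |∑ i : Fin N, ‖∑ j : Fin K, overlap N K i j • ξ j‖ ^ 2 - N / K * ∑ j, ‖ξ j‖ ^ 2|
      ≤ 2 * ∑ j, ∑ l, |⟪ξ j, ξ l⟫| := by
  have h_diag : N / K * ∑ j, ‖ξ j‖ ^ 2
      = ∑ j : Fin K, ∑ l : Fin K, (if (j : ℕ) = l then (N / K : ℝ) else 0) * ⟪ξ j, ξ l⟫ := by
    simp only [Fin.val_inj, ite_mul, zero_mul, Finset.sum_ite_eq, Finset.mem_univ, if_true,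
      real_inner_self_eq_norm_sq, Finset.mul_sum]
  rw [sum_norm_sum_smul_sq, h_diag, ← Finset.sum_sub_distrib, Finset.mul_sum]
  refine (Finset.abs_sum_le_sum_abs _ _).trans (Finset.sum_le_sum fun j _ => ?_)
  rw [← Finset.sum_sub_distrib, Finset.mul_sum]
  refine (Finset.abs_sum_le_sum_abs _ _).trans (Finset.sum_le_sum fun l _ => ?_)
  rw [← sub_mul, abs_mul]
  exact mul_le_mul_of_nonneg_right (abs_sum_overlap_mul_overlap_sub_le j.isLt) (abs_nonneg _)

end OverlapGram

/-- The law of the piecewise linear path of the random walk started at `x` with `N` independent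
steps, each uniformly distributed on the finite family `v`. -/
def walkLaw {d : ℕ} {P : Type*} [Fintype P] (x : Ed d) (N : ℕ) (v : P → Ed d) :
    Measure (Omega1 x) :=
  Measure.sum fun s : Fin N → P =>
    ((Fintype.card P : ℝ≥0∞) ^ N)⁻¹ • Measure.dirac (walkPath x v s)

/-- The increments of a path over the `K` cells of the regular grid, as a vector of the Euclidean
space `(ℝ^d)^K`. -/
def gridIncrs {d : ℕ} {x : Ed d} (K : ℕ) (ω : Omega1 x) : PiLp 2 fun _ : Fin K => Ed d :=
  WithLp.toLp 2 fun j => gridIncr K ω.1 j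

lemma continuous_gridIncrs {d : ℕ} {x : Ed d} (K : ℕ) :
    Continuous (gridIncrs K : Omega1 x → _) :=
  (PiLp.continuous_toLp 2 _).comp (continuous_pi fun j =>
    (continuous_gridIncr K j).comp continuous_subtype_val)

lemma charFun_map_gridIncrs {d : ℕ} {x : Ed d} (K : ℕ) (μ : Measure (Omega1 x))
    (ξ : PiLp 2 fun _ : Fin K => Ed d) :
    charFun (μ.map (gridIncrs K)) ξ =
      ∫ ω : Omega1 x, Complex.exp ((∑ j : Fin K, ⟪gridIncr K ω.1 j, ξ j⟫ : ℝ) * Complex.I) ∂μ := by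
  rw [charFun_apply, integral_map (continuous_gridIncrs K).aemeasurable
    (Continuous.aestronglyMeasurable (by fun_prop))]
  rfl

section WalkLaw

variable {d N : ℕ} {P : Type*} [Fintype P] [Nonempty P]

instance isProbabilityMeasure_walkLaw (x : Ed d) (v : P → Ed d) :
    IsProbabilityMeasure (walkLaw x N v) := by
  constructor
  have h0 : ((Fintype.card P : ℝ≥0∞) ^ N) ≠ 0 := by simp
  rw [walkLaw, Measure.sum_apply _ MeasurableSet.univ, tsum_fintype]
  simp only [Measure.smul_apply, measure_univ, smul_eq_mul, mul_one, Finset.sum_const,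
    Finset.card_univ, Fintype.card_fun, Fintype.card_fin, nsmul_eq_mul, Nat.cast_pow]
  exact ENNReal.mul_inv_cancel h0 (by finiteness)

lemma integral_walkLaw {F : Type*} [NormedAddCommGroup F] [NormedSpace ℝ F] [CompleteSpace F]
    [Module ℚ≥0 F] (x : Ed d) (v : P → Ed d) (g : Omega1 x → F) :
    ∫ ω, g ω ∂(walkLaw x N v) = 𝔼 s : Fin N → P, g (walkPath x v s) := by
  have h_ne : ((Fintype.card P : ℝ≥0∞) ^ N)⁻¹ ≠ ∞ := by simp
  rw [walkLaw, Measure.sum_fintype, integral_finsetSum_measure fun s _ =>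
    (integrable_dirac (by finiteness)).smul_measure h_ne]
  simp only [integral_smul_measure, integral_dirac, ENNReal.toReal_inv, ENNReal.toReal_pow,
    ENNReal.toReal_natCast, ← Finset.smul_sum]
  rw [Finset.expect_univ, ← NNRat.cast_smul_eq_nnqsmul ℝ]
  simp

lemma charFun_gridIncrs_walkLaw (x : Ed d) (v : P → Ed d) (K : ℕ)
    (ξ : PiLp 2 fun _ : Fin K => Ed d) :
    charFun ((walkLaw x N v).map (gridIncrs K)) ξ
      = ∏ i : Fin N, stepChar v (∑ j : Fin K, overlap N K i j • ξ j) := by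
  have h_inner : ∀ s : Fin N → P, ∑ j : Fin K, ⟪gridIncr K (walkPath x v s).1 j, ξ j⟫
      = ∑ i, ⟪v (s i), ∑ j : Fin K, overlap N K i j • ξ j⟫ := fun s => by
    simp_rw [gridIncr_walkPath x s (Fin.is_lt _), sum_inner, inner_sum, real_inner_smul_left,
      real_inner_smul_right]
    exact Finset.sum_comm
  simp_rw [charFun_map_gridIncrs, integral_walkLaw, h_inner, Complex.ofReal_sum, Finset.sum_mul,
    Complex.exp_sum, stepChar, ← expect_prod_apply]

lemma IsIsotropicStep.tendsto_charFun_gridIncrs_walkLaw {v : P → Ed d} {c : ℝ}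
    (hv : IsIsotropicStep v c) (x : Ed d) {κ : Type*} {l : Filter κ} {a : κ → ℝ}
    (ha : Tendsto a l (𝓝 0)) {N : κ → ℕ} {T : ℝ} (hN : Tendsto (fun k => a k ^ 2 * N k) l (𝓝 T))
    (K : ℕ) (ξ : PiLp 2 fun _ : Fin K => Ed d) :
    Tendsto (fun k => charFun ((walkLaw x (N k) fun p => a k • v p).map (gridIncrs K)) ξ) l
      (𝓝 (Real.exp (-(c * T / 2 * (‖ξ‖ ^ 2 / K))) : ℂ)) := by
  have h_exponent : c * T / 2 * (‖ξ‖ ^ 2 / K) = c / 2 * (T / K * ‖ξ‖ ^ 2) := by ring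
  simp_rw [h_exponent, charFun_gridIncrs_walkLaw, stepChar_smul]
  refine hv.tendsto_prod_stepChar ha hN (fun k i => norm_sum_overlap_smul_le (N k) K i ξ) ?_
  have h_main : Tendsto (fun k => a k ^ 2 * N k / K * ‖ξ‖ ^ 2) l (𝓝 (T / K * ‖ξ‖ ^ 2)) :=
    (hN.div_const _).mul_const _
  refine h_main.congr_dist (squeeze_zero (fun _ => dist_nonneg)
    (g := fun k => a k ^ 2 * (2 * ∑ j, ∑ l, |⟪ξ j, ξ l⟫|)) (fun k => ?_) ?_)
  · rw [dist_comm, Real.dist_eq, mul_div_assoc, mul_assoc, ← mul_sub, abs_mul, abs_sq,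
      PiLp.norm_sq_eq_of_L2]
    exact mul_le_mul_of_nonneg_left (abs_sum_norm_sum_overlap_smul_sq_sub_le (N k) _) (sq_nonneg _)
  · simpa using (ha.pow 2).mul_const (2 * ∑ j, ∑ l, |⟪ξ j, ξ l⟫|)

end WalkLaw

/-! ### Increments of Wiener paths -/

lemma exists_sum_Ici_eq {M : Type*} [AddCommGroup M] {K : ℕ} (ξ : Fin K → M) :
    ∃ ζ : Fin K → M, ∀ i, ∑ j ∈ Finset.Ici i, ζ j = ξ i := by
  let ξ' : ℕ → M := fun i => if hi : i < K then ξ ⟨i, hi⟩ else 0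
  refine ⟨fun j => ξ' j - ξ' (j + 1), fun i => ?_⟩
  calc ∑ j ∈ Finset.Ici i, (ξ' j - ξ' (j + 1))
      = ∑ j ∈ Finset.Ico (i : ℕ) K, (ξ' j - ξ' (j + 1)) := by
        rw [← Fin.map_valEmbedding_Ici, Finset.sum_map]
        rfl
    _ = ξ' i - ξ' K := by
        rw [Finset.sum_Ico_eq_sub _ i.isLt.le, Finset.sum_range_sub', Finset.sum_range_sub']
        abel
    _ = ξ i := by simp [ξ']

lemma sum_Iic_gridIncr {d K : ℕ} (ω : PathSp d) (j : Fin K) :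
    ∑ i ∈ Finset.Iic j, gridIncr K ω i = evalAt ω ((j + 1 : ℕ) / K) - ω 0 := by
  calc ∑ i ∈ Finset.Iic j, gridIncr K ω i
      = ∑ i ∈ Finset.range (j + 1), (evalAt ω ((i + 1 : ℕ) / K) - evalAt ω (i / K)) := by
        rw [Nat.range_succ_eq_Iic, ← Fin.map_valEmbedding_Iic, Finset.sum_map]
        simp only [gridIncr, Fin.valEmbedding_apply, Nat.cast_add, Nat.cast_one]
    _ = _ := by
        rw [Finset.sum_range_sub fun i : ℕ => evalAt ω (i / K), Nat.cast_zero, zero_div,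
          evalAt_zero]

lemma sum_inner_sum_Ici_gridIncr {d K : ℕ} {x : Ed d} (ω : Omega1 x) (ζ : Fin K → Ed d) :
    ∑ j : Fin K, ⟪gridIncr K ω.1 j, ∑ i ∈ Finset.Ici j, ζ i⟫
      = ∑ i : Fin K, ⟪ζ i, evalAt ω.1 ((i + 1 : ℕ) / K)⟫ - ⟪∑ i, ζ i, x⟫ := by
  calc _ = ∑ i : Fin K, ∑ j ∈ Finset.Iic i, ⟪ζ i, gridIncr K ω.1 j⟫ := by
        simp_rw [inner_sum, real_inner_comm]
        exact Finset.sum_comm' (by simp)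
    _ = _ := by
        simp_rw [← inner_sum, sum_Iic_gridIncr, ω.2, inner_sub_right, Finset.sum_sub_distrib,
          sum_inner]

lemma IsWienerFamily.charFun_gridIncrs {d : ℕ} {x : Ed d} {Wt : ℝ → Measure (Omega1 x)}
    (hWt : IsWienerFamily x Wt) {t : ℝ} (ht : 0 < t) {K : ℕ} (hK : 0 < K)
    (ξ : PiLp 2 fun _ : Fin K => Ed d) :
    charFun ((Wt t).map (gridIncrs K)) ξ = (Real.exp (-(t / 2 * (‖ξ‖ ^ 2 / K))) : ℂ) := by
  have hK' : (0 : ℝ) < K := Nat.cast_pos.2 hK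
  obtain ⟨ζ, hζ⟩ := exists_sum_Ici_eq (fun j => ξ j)
  have h_char := (hWt t ht).2 K (fun i => i / K) (by simp)
    (fun i _ => by simpa using div_lt_div_of_pos_right (lt_add_one (i : ℝ)) hK')
    (div_self hK'.ne').le ζ
  have h_width : ∀ i : ℕ, ((i + 1 : ℕ) / K - i / K : ℝ) = (K : ℝ)⁻¹ := fun i => by
    push_cast
    ring
  simp_rw [hζ, h_width, ← Finset.mul_sum, ← PiLp.norm_sq_eq_of_L2] at h_char
  simp_rw [charFun_map_gridIncrs, ← hζ, sum_inner_sum_Ici_gridIncr, Complex.ofReal_sub, sub_mul,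
    Complex.exp_sub, integral_div, mul_comm _ Complex.I, h_char, Complex.exp_add]
  rw [mul_div_cancel_right₀ _ (Complex.exp_ne_zero _), Complex.ofReal_exp]
  congr 2
  ring

/-! ### Convergence in law of random walks -/

lemma dist_integral_le_mul_integral_dist {X : Type*} [PseudoMetricSpace X] [MeasurableSpace X]
    [OpensMeasurableSpace X] {μ : Measure X} [IsFiniteMeasure μ] {f : BoundedContinuousFunction X ℝ}
    {L : NNReal} (hf : LipschitzWith L f) {T : X → X} (hT : Continuous T)
    (h_int : Integrable (fun ω => dist ω (T ω)) μ) :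
    dist (∫ ω, f ω ∂μ) (∫ ω, f (T ω) ∂μ) ≤ L * ∫ ω, dist ω (T ω) ∂μ := by
  have h_comp : Integrable (fun ω => f (T ω)) μ := (f.compContinuous ⟨T, hT⟩).integrable μ
  rw [dist_eq_norm, ← integral_sub (f.integrable μ) h_comp, ← integral_const_mul]
  exact norm_integral_le_of_norm_le (h_int.const_mul _) (ae_of_all _ fun ω =>
    (dist_eq_norm (f ω) (f (T ω))).symm.trans_le (hf.dist_le_mul ω (T ω)))

theorem tendsto_of_tendsto_integral_comp_of_integral_dist_le {X : Type*} [PseudoMetricSpace X]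
    [MeasurableSpace X] [OpensMeasurableSpace X] {κ : Type*} {l : Filter κ}
    [l.IsCountablyGenerated] {P : κ → ProbabilityMeasure X} {P₀ : ProbabilityMeasure X}
    {T : ℕ → X → X} (hT : ∀ n, Continuous (T n)) (hT_lim : ∀ ω, Tendsto (T · ω) atTop (𝓝 ω))
    (h_comp : ∀ n, ∀ f : BoundedContinuousFunction X ℝ,
      Tendsto (fun k => ∫ ω, f (T n ω) ∂(P k)) l (𝓝 (∫ ω, f (T n ω) ∂P₀)))
    (h_int : ∀ n k, Integrable (fun ω => dist ω (T n ω)) (P k : Measure X)) {b : ℕ → ℝ}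
    (hb : Tendsto b atTop (𝓝 0)) (h_dist : ∀ᶠ k in l, ∀ n, ∫ ω, dist ω (T n ω) ∂(P k) ≤ b n) :
    Tendsto P l (𝓝 P₀) := by
  rw [tendsto_iff_forall_lipschitz_integral_tendsto]
  rintro g ⟨C, hC⟩ ⟨L, hL⟩
  let f := BoundedContinuousFunction.mkOfBound ⟨g, hL.continuous⟩ C hC
  have h_unif : TendstoUniformlyOnFilter (fun n k => ∫ ω, f (T n ω) ∂(P k))
      (fun k => ∫ ω, f ω ∂(P k)) atTop l := by
    refine Metric.tendstoUniformlyOnFilter_iff.2 fun ε hε => ?_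
    have h_small : ∀ᶠ n in atTop, L * b n < ε :=
      (mul_zero (L : ℝ) ▸ hb.const_mul (L : ℝ)).eventually_lt_const hε
    filter_upwards [h_small.prod_mk h_dist] with ⟨n, k⟩ ⟨hn, hk⟩
    exact (dist_integral_le_mul_integral_dist (f := f) hL (hT n) (h_int n k)).trans_lt
      ((mul_le_mul_of_nonneg_left (hk n) L.2).trans_lt hn)
  refine h_unif.tendsto_of_eventually_tendsto (Eventually.of_forall fun n => h_comp n f) ?_
  refine tendsto_integral_of_dominated_convergence (fun _ => ‖f‖) (fun n => ?_)
    (integrable_const _) (fun n => ae_of_all _ fun ω => f.norm_coe_le_norm _)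
    (ae_of_all _ fun ω => (f.continuous.tendsto _).comp (hT_lim ω))
  exact (f.continuous.comp (hT n)).aestronglyMeasurable

section Donsker

variable {d : ℕ} {P : Type*} [Fintype P] [Nonempty P]

lemma integrable_walkLaw {N : ℕ} (x : Ed d) (v : P → Ed d) {F : Type*} [NormedAddCommGroup F]
    (g : Omega1 x → F) : Integrable g (walkLaw x N v) := by
  rw [walkLaw, Measure.sum_fintype, integrable_finsetSum_measure]
  exact fun s _ => (integrable_dirac (by finiteness)).smul_measure (by simp)

namespace IsIsotropicStep

variable {v : P → Ed d} {c : ℝ} {x : Ed d} {Wt : ℝ → Measure (Omega1 x)} {a : ℕ → ℝ} {N : ℕ → ℕ}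
  {T : ℝ}

lemma tendsto_integral_comp_gridPath (hv : IsIsotropicStep v c) (hWt : IsWienerFamily x Wt)
    (hcT : 0 < c * T) (ha : Tendsto a atTop (𝓝 0))
    (hN : Tendsto (fun k => a k ^ 2 * N k) atTop (𝓝 T)) {K : ℕ} (hK : 0 < K)
    (f : BoundedContinuousFunction (Omega1 x) ℝ) :
    Tendsto (fun k => ∫ ω, f (gridPath K ω) ∂(walkLaw x (N k) fun p => a k • v p)) atTop
      (𝓝 (∫ ω, f (gridPath K ω) ∂(Wt (c * T)))) := by
  have h_prob := (hWt _ hcT).1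
  have h_meas : Measurable (gridIncrs K : Omega1 x → _) := (continuous_gridIncrs K).measurable
  let law (μ : Measure (Omega1 x)) [IsProbabilityMeasure μ] :
      ProbabilityMeasure (PiLp 2 fun _ : Fin K => Ed d) :=
    ⟨μ.map (gridIncrs K), Measure.isProbabilityMeasure_map h_meas.aemeasurable⟩
  have h_law : Tendsto (fun k => law (walkLaw x (N k) fun p => a k • v p)) atTop
      (𝓝 (law (Wt (c * T)))) := by
    refine ProbabilityMeasure.tendsto_of_tendsto_charFun fun ξ => ?_
    simpa only [law, ProbabilityMeasure.coe_mk, hWt.charFun_gridIncrs hcT hK ξ] using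
      hv.tendsto_charFun_gridIncrs_walkLaw x ha hN K ξ
  let interp : C(PiLp 2 fun _ : Fin K => Ed d, Omega1 x) :=
    ⟨fun y => pwLin1 x K fun j => y j, (continuous_pwLin1 x K).comp (PiLp.continuous_ofLp 2 _)⟩
  have h_map : ∀ μ : Measure (Omega1 x),
      ∫ y, f (interp y) ∂(μ.map (gridIncrs K)) = ∫ ω, f (gridPath K ω) ∂μ := fun μ =>
    integral_map h_meas.aemeasurable (f.compContinuous interp).continuous.aestronglyMeasurable
  simpa only [law, ProbabilityMeasure.coe_mk, BoundedContinuousFunction.compContinuous_apply,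
    h_map] using
    ProbabilityMeasure.tendsto_iff_forall_integral_tendsto.1 h_law (f.compContinuous interp)

theorem tendsto_walkLaw (hv : IsIsotropicStep v c) (hWt : IsWienerFamily x Wt)
    (hcT : 0 < c * T) (ha : Tendsto a atTop (𝓝 0))
    (hN : Tendsto (fun k => a k ^ 2 * N k) atTop (𝓝 T)) :
    Tendsto (β := ProbabilityMeasure (Omega1 x))
      (fun k => ⟨walkLaw x (N k) fun p => a k • v p, inferInstance⟩) atTop
      (𝓝 ⟨Wt (c * T), (hWt _ hcT).1⟩) := by
  obtain ⟨r, hr⟩ : ∃ r, ∀ p, ‖v p‖ ≤ r :=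
    (Set.finite_range fun p => ‖v p‖).bddAbove.imp fun r h p => h ⟨p, rfl⟩
  refine tendsto_of_tendsto_integral_comp_of_integral_dist_le (T := fun n => gridPath (2 ^ n))
    (b := fun n => 10 * (1 + 3 * (r ^ 2 * (T + 1)) ^ 2) * (9 / 10) ^ n)
    (fun n => continuous_gridPath _)
    (fun ω => (tendsto_gridPath ω).comp (tendsto_pow_atTop_atTop_of_one_lt one_lt_two))
    (fun n f => hv.tendsto_integral_comp_gridPath hWt hcT ha hN (by positivity) f)
    (fun n k => integrable_walkLaw x _ _) ?_ ?_
  · simpa using (tendsto_pow_atTop_nhds_zero_of_lt_one (r := (9 / 10 : ℝ)) (by norm_num)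
      (by norm_num)).const_mul (10 * (1 + 3 * (r ^ 2 * (T + 1)) ^ 2))
  · filter_upwards [hN.eventually_lt_const (lt_add_one T)] with k hk n
    have h_sum : ∑ p, a k • v p = 0 := by rw [← Finset.smul_sum, hv.sum_eq_zero, smul_zero]
    have h_norm : ∀ p, ‖a k • v p‖ ≤ |a k| * r := fun p => by
      rw [norm_smul, Real.norm_eq_abs]
      exact mul_le_mul_of_nonneg_left (hr p) (abs_nonneg _)
    refine (integral_walkLaw x _ _).trans_le
      ((expect_dist_gridPath_two_pow_le h_sum h_norm x n).trans ?_)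
    rw [mul_pow |a k|, sq_abs, mul_comm (a k ^ 2), mul_assoc (r ^ 2)]
    gcongr

end IsIsotropicStep

end Donsker

/-! ### Geometric and exponential numbers of steps -/

section ExpMeasure

variable {r : ℝ}

lemma expMeasure_eq_withDensity_restrict_Ioi (r : ℝ) :
    expMeasure r =
      (volume.restrict (Ioi 0)).withDensity fun t => ENNReal.ofReal (r * exp (-(r * t))) := by
  rw [restrict_Ioi_eq_restrict_Ici, ← withDensity_indicator measurableSet_Ici]
  change volume.withDensity (exponentialPDF r) = _
  congr with t
  by_cases ht : 0 ≤ t <;> simp [exponentialPDF_eq, ht]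

lemma ae_pos_expMeasure (r : ℝ) : ∀ᵐ t ∂(expMeasure r), 0 < t := by
  rw [expMeasure_eq_withDensity_restrict_Ioi]
  exact (withDensity_absolutelyContinuous _ _).ae_le (ae_restrict_mem measurableSet_Ioi)

lemma integral_expMeasure {E : Type*} [NormedAddCommGroup E] [NormedSpace ℝ E] (hr : 0 ≤ r)
    (g : ℝ → E) :
    ∫ t, g t ∂(expMeasure r) = r • ∫ t in Ioi 0, exp (-(r * t)) • g t := by
  rw [expMeasure_eq_withDensity_restrict_Ioi, integral_withDensity_eq_integral_toReal_smul₀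
    (by fun_prop) (ae_of_all _ fun _ => ENNReal.ofReal_lt_top), ← integral_smul]
  simp_rw [ENNReal.toReal_ofReal (mul_nonneg hr (exp_pos _).le), mul_smul]

lemma expMeasure_Ico {a b : ℝ} (hr : 0 < r) (ha : 0 ≤ a) (hab : a ≤ b) :
    expMeasure r (Ico a b) = ENNReal.ofReal (exp (-(r * a)) - exp (-(r * b))) := by
  have h_prob := isProbabilityMeasure_expMeasure hr
  have h_atoms : NullSingletonClass (expMeasure r) := nullSingletonClass_withDensity _
  rw [measure_congr Ico_ae_eq_Ioc, ← measure_cdf (expMeasure r), StieltjesFunction.measure_Ioc,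
    cdf_expMeasure_eq hr, cdf_expMeasure_eq hr, if_pos ha, if_pos (ha.trans hab)]
  congr 1
  ring

lemma ne_zero_of_eq_one_sub_exp_neg {p : I} {s : ℝ} (hs : 0 < s) (hp : (p : ℝ) = 1 - exp (-s)) :
    p ≠ 0 := by
  rw [← Subtype.coe_ne_coe, hp]
  exact (sub_pos.2 (exp_lt_one_iff.2 (neg_neg_of_pos hs))).ne'

theorem map_floor_div_expMeasure {δ : ℝ} (hr : 0 < r) (hδ : 0 < δ) {p : I}
    (hp : (p : ℝ) = 1 - exp (-(r * δ))) :
    (expMeasure r).map (fun t => ⌊t / δ⌋₊) = geometricMeasure p := by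
  have hp0 := ne_zero_of_eq_one_sub_exp_neg (mul_pos hr hδ) hp
  refine Measure.ext_of_singleton fun n => ?_
  have h_preimage : (fun t => ⌊t / δ⌋₊) ⁻¹' {n} =ᵐ[expMeasure r] Ico (n * δ) ((n + 1) * δ) := by
    filter_upwards [ae_pos_expMeasure r] with t ht
    have h_floor : ⌊t / δ⌋₊ = n ↔ n * δ ≤ t ∧ t < (n + 1) * δ := by
      rw [Nat.floor_eq_iff (by positivity), le_div_iff₀ hδ, div_lt_iff₀ hδ]
    exact propext h_floor
  rw [Measure.map_apply (by fun_prop) (measurableSet_singleton n), measure_congr h_preimage,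
    expMeasure_Ico hr (by positivity) (by gcongr; linarith), geometricMeasure_singleton hp0, hp,
    sub_sub_cancel, ← exp_nat_mul, mul_sub, mul_one, ← exp_add]
  congr 3 <;> ring_nf

end ExpMeasure

lemma tendsto_sq_mul_floor_div_sq {b : ℝ} (hb : 0 ≤ b) :
    Tendsto (fun a : ℝ => a ^ 2 * ⌊b / a ^ 2⌋₊) (𝓝[>] 0) (𝓝 b) := by
  have h_inv : Tendsto (fun a : ℝ => (a ^ 2)⁻¹) (𝓝[>] 0) atTop := by
    simpa only [inv_pow, Function.comp_def] using (tendsto_pow_atTop two_ne_zero).comp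
      (tendsto_inv_nhdsGT_zero (𝕜 := ℝ))
  refine ((tendsto_nat_floor_mul_div_atTop hb).comp h_inv).congr fun a => ?_
  rw [Function.comp_apply, div_inv_eq_mul, mul_comm, div_eq_mul_inv]

/-! ### The nearest-neighbour walk on the lattice -/

lemma isIsotropicStep_stepVec (d : ℕ) :
    IsIsotropicStep (stepVec 1 : Fin d × Bool → Ed d) (d : ℝ)⁻¹ where
  sum_eq_zero := by simp [Fintype.sum_prod_type, stepVec]
  expect_inner_sq θ := by
    have h_sq : ∀ p : Fin d × Bool, ⟪stepVec 1 p, θ⟫ ^ 2 = θ p.1 ^ 2 := by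
      rintro ⟨i, b⟩
      cases b <;> simp [stepVec, EuclideanSpace.inner_single_left]
    simp_rw [h_sq, Fintype.expect_eq_sum_div_card, Fintype.sum_prod_type, EuclideanSpace.norm_sq_eq]
    simp [← Finset.mul_sum]
    field_simp

lemma VxaN_eq_walkLaw {d : ℕ} (x : Ed d) (a : ℝ) (N : ℕ) :
    VxaN x a N = walkLaw x N fun p => a • stepVec 1 p := by
  have h_step : ∀ p : Fin d × Bool, stepVec a p = a • stepVec 1 p := by
    rintro ⟨i, b⟩
    cases b <;> simp [stepVec]
  simp only [VxaN, walkLaw, walkPath, h_step, Fintype.card_prod, Fintype.card_fin,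
    Fintype.card_bool, mul_comm d, Nat.cast_mul]

section Lattice

variable {d : ℕ} [NeZero d] {x : Ed d}

instance isProbabilityMeasure_VxaN (a : ℝ) (N : ℕ) : IsProbabilityMeasure (VxaN x a N) := by
  rw [VxaN_eq_walkLaw]
  infer_instance

theorem IsWienerFamily.tendsto_integral_VxaN_floor {Wt : ℝ → Measure (Omega1 x)}
    (hWt : IsWienerFamily x Wt) {t : ℝ} (ht : 0 < t) (f : BoundedContinuousFunction (Omega1 x) ℝ) :
    Tendsto (fun a : ℝ => ∫ ω, f ω ∂(VxaN x a ⌊t / (a ^ 2 / d)⌋₊)) (𝓝[>] 0)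
      (𝓝 (∫ ω, f ω ∂(Wt t))) := by
  refine tendsto_of_seq_tendsto fun a ha => ?_
  have h_time : (d : ℝ)⁻¹ * (t * d) = t := mul_comm t d ▸ inv_mul_cancel_left₀ (NeZero.ne _) t
  have h_walk := (isIsotropicStep_stepVec d).tendsto_walkLaw hWt (h_time.symm ▸ ht)
    (ha.mono_right nhdsWithin_le_nhds) ((tendsto_sq_mul_floor_div_sq (by positivity)).comp ha)
  simpa only [ProbabilityMeasure.coe_mk, h_time, VxaN_eq_walkLaw, div_div_eq_mul_div,
    Function.comp_def] using ProbabilityMeasure.tendsto_iff_forall_integral_tendsto.1 h_walk f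

lemma integral_Vxa_eq_integral_geometricMeasure {m a : ℝ} {p : I} (hp0 : p ≠ 0)
    (hp : (p : ℝ) = 1 - exp (-(m ^ 2 / 2 * (a ^ 2 / d))))
    (f : BoundedContinuousFunction (Omega1 x) ℝ) :
    ∫ ω, f ω ∂(Vxa x m a) = ∫ n, (∫ ω, f ω ∂(VxaN x a n)) ∂(geometricMeasure p) := by
  have h_weight : ∀ n : ℕ, exp (-m ^ 2 * a ^ 2 * n / (2 * d)) = (1 - p : ℝ) ^ n := fun n => by
    rw [hp, sub_sub_cancel, ← exp_nat_mul]
    ring_nf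
  have h_one_sub : 1 - exp (-m ^ 2 * a ^ 2 / (2 * d)) = p := by
    rw [hp]
    ring_nf
  have h_finite : IsFiniteMeasure (Measure.sum fun n : ℕ =>
      ENNReal.ofReal ((1 - p : ℝ) ^ n) • VxaN x a n) := by
    constructor
    simp_rw [Measure.sum_apply _ MeasurableSet.univ, Measure.smul_apply, measure_univ, smul_eq_mul,
      mul_one]
    refine Summable.tsum_ofReal_lt_top (summable_geometric_of_lt_one (sub_nonneg.2 p.2.2) ?_)
    exact sub_lt_self _ (unitInterval.pos_iff_ne_zero.2 hp0)
  simp_rw [Vxa, h_weight, h_one_sub]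
  rw [integral_smul_measure, integral_sum_measure (f.integrable _), integral_geometricMeasure hp0,
    ENNReal.toReal_ofReal p.2.1, smul_eq_mul, ← tsum_mul_left]
  refine tsum_congr fun n => ?_
  rw [integral_smul_measure, ENNReal.toReal_ofReal (pow_nonneg (sub_nonneg.2 p.2.2) n),
    smul_eq_mul, smul_eq_mul, mul_left_comm, mul_assoc]

lemma integral_Vxa_eq_integral_expMeasure {m a : ℝ} (hm : m ≠ 0) (ha : a ≠ 0)
    (f : BoundedContinuousFunction (Omega1 x) ℝ) :
    ∫ ω, f ω ∂(Vxa x m a) =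
      ∫ t, (∫ ω, f ω ∂(VxaN x a ⌊t / (a ^ 2 / d)⌋₊)) ∂(expMeasure (m ^ 2 / 2)) := by
  have hr : 0 < m ^ 2 / 2 := by positivity
  have hδ : 0 < a ^ 2 / d := by positivity [NeZero.pos d]
  let p : I := ⟨1 - exp (-(m ^ 2 / 2 * (a ^ 2 / d))),
    sub_nonneg.2 (exp_le_one_iff.2 (neg_nonpos.2 (mul_pos hr hδ).le)), sub_le_self _ (exp_pos _).le⟩
  rw [integral_Vxa_eq_integral_geometricMeasure (p := p)
    (ne_zero_of_eq_one_sub_exp_neg (mul_pos hr hδ) rfl) rfl, ← map_floor_div_expMeasure hr hδ rfl]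
  exact integral_map (by fun_prop) measurable_from_top.aestronglyMeasurable

theorem IsWienerFamily.tendsto_integral_Vxa {Wt : ℝ → Measure (Omega1 x)}
    (hWt : IsWienerFamily x Wt) {m : ℝ} (hm : m ≠ 0) (f : BoundedContinuousFunction (Omega1 x) ℝ) :
    Tendsto (fun a : ℝ => ∫ ω, f ω ∂(Vxa x m a)) (𝓝[>] 0)
      (𝓝 (∫ t, (∫ ω, f ω ∂(Wt t)) ∂(expMeasure (m ^ 2 / 2)))) := by
  have h_prob := isProbabilityMeasure_expMeasure (r := m ^ 2 / 2) (by positivity)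
  have h_exp : Tendsto (fun a : ℝ =>
      ∫ t, (∫ ω, f ω ∂(VxaN x a ⌊t / (a ^ 2 / d)⌋₊)) ∂(expMeasure (m ^ 2 / 2))) (𝓝[>] 0)
      (𝓝 (∫ t, (∫ ω, f ω ∂(Wt t)) ∂(expMeasure (m ^ 2 / 2)))) := by
    refine tendsto_integral_filter_of_dominated_convergence (fun _ => ‖f‖)
      (Eventually.of_forall fun a => ?_)
      (Eventually.of_forall fun a => ae_of_all _ fun t => f.norm_integral_le_norm _)
      (integrable_const _) ?_
    · have h_floor : Measurable fun t : ℝ => ⌊t / (a ^ 2 / d)⌋₊ := by fun_prop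
      exact ((measurable_from_top (f := fun n => ∫ ω, f ω ∂(VxaN x a n))).comp
        h_floor).aestronglyMeasurable
    · filter_upwards [ae_pos_expMeasure _] with t ht
      exact hWt.tendsto_integral_VxaN_floor ht f
  refine h_exp.congr' ?_
  filter_upwards [self_mem_nhdsWithin] with a ha
  exact (integral_Vxa_eq_integral_expMeasure hm (ne_of_gt ha) f).symm

end Lattice

/-- **Theorem 3.2 (strong form)**: `V'_{x,a} → (m²/2) V'_x` weakly as `a → 0⁺`,
where `V'_x(A) = ∫_0^∞ e^{-m²t/2} W_x^t(A) dt`. -/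
theorem Vxa_tendsto_weakly (d : ℕ) (hd : 1 ≤ d) (m : ℝ) (hm : 0 < m) (x : Ed d)
    (Wt : ℝ → Measure (Omega1 x)) (hWt : IsWienerFamily x Wt) :
    ∀ f : BoundedContinuousFunction (Omega1 x) ℝ,
      Tendsto (fun a : ℝ => ∫ ω, f ω ∂(Vxa x m a)) (nhdsWithin 0 (Set.Ioi 0))
        (nhds ((m ^ 2 / 2) *
          ∫ t in Set.Ioi (0 : ℝ), Real.exp (-m ^ 2 * t / 2) * ∫ ω, f ω ∂(Wt t))) := by
  intro f
  have : NeZero d := ⟨by lia⟩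
  have h_limit : ∫ t, (∫ ω, f ω ∂(Wt t)) ∂(expMeasure (m ^ 2 / 2)) =
      (m ^ 2 / 2) * ∫ t in Ioi (0 : ℝ), exp (-m ^ 2 * t / 2) * ∫ ω, f ω ∂(Wt t) := by
    simp only [integral_expMeasure (r := m ^ 2 / 2) (by positivity), smul_eq_mul]
    ring_nf
  exact h_limit ▸ hWt.tendsto_integral_Vxa hm.ne' f

end
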